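/- Every entry of every matrix F ∈ 𝔉 is a nonnegative integer multiple of 4. Consequently, for every μ ∈ ℝ³ and every σ ∈ Γ(μ), there exists a 3×3 matrix (n_ij) of nonnegative integers such that σ_i = 4·Σ_{j=1}^{3} n_ij μ_j for i = 1, 2, 3. -/

import Mathlib

/-- The (normalized) Cartan matrix of the affine Lie algebra `B₂⁽¹⁾`. -/
noncomputable def cartanB2 : Matrix (Fin 3) (Fin 3) ℝ :=
  !![1, 0, -1; 0, 1, -1; -1/2, -1/2, 1]

/-- The generator `R_i` (for the parameter `μ`) acting on `ℝ³`. -/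
noncomputable def R (μ : Fin 3 → ℝ) (i : Fin 3) (σ : Fin 3 → ℝ) : Fin 3 → ℝ :=
  Function.update σ i (σ i + 4 * μ i - 2 * ∑ j, cartanB2 i j * σ j)

/-- Membership in `Γ(μ)`, the smallest subset of `ℝ³` containing `0` and closed under
the generators `R₁, R₂, R₃`. -/
inductive GammaMem (μ : Fin 3 → ℝ) : (Fin 3 → ℝ) → Prop
  | zero : GammaMem μ 0
  | step (i : Fin 3) {σ : Fin 3 → ℝ} : GammaMem μ σ → GammaMem μ (R μ i σ)

/-- The lift of the generator `R_i` to 3×3 real matrices: the `i`-th row `F_i` is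
replaced by `F_i + 4 e_i - 2 ∑_j a_{ij} F_j` and the other rows are unchanged. -/
noncomputable def RM (i : Fin 3) (F : Matrix (Fin 3) (Fin 3) ℝ) : Matrix (Fin 3) (Fin 3) ℝ :=
  Matrix.updateRow F i
    (fun k => F i k + 4 * (if k = i then 1 else 0) - 2 * ∑ j, cartanB2 i j * F j k)

/-- Membership in `𝔉`, the smallest set of 3×3 real matrices containing the zero
matrix and closed under the lifted generators `R₁, R₂, R₃`. -/
inductive FMem : Matrix (Fin 3) (Fin 3) ℝ → Prop
  | zero : FMem 0
  | step (i : Fin 3) {F : Matrix (Fin 3) (Fin 3) ℝ} : FMem F → FMem (RM i F)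

/-!
Evaluating the matrices of `𝔉` at `μ` gives exactly `Γ(μ)`, so the `k`-th column of a matrix in `𝔉`
lies in `Γ(e_k)`, and it is enough to study `Γ(e_k)`. As `2 a_ij` is an integer, the entries of its
elements are integer multiples of `4`. The reflection `R_i` exchanges the two roots of the Pohozaev
identity read as a quadratic equation in `σ_i`, so the identity holds on `Γ(e_k)`. Completing
squares in it bounds every entry below by `-2`, and an integer multiple of `4` that is at least `-2`
is nonnegative.
-/

open Matrix

lemma R_mulVec (μ : Fin 3 → ℝ) (i : Fin 3) (F : Matrix (Fin 3) (Fin 3) ℝ) :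
    R μ i (F *ᵥ μ) = RM i F *ᵥ μ := by
  ext l
  obtain rfl | hl := eq_or_ne l i
  · simp only [R, RM, Function.update_self, updateRow_self, mulVec, dotProduct, Fin.sum_univ_three]
    fin_cases l <;> simp <;> ring
  · simp [R, RM, mulVec, hl]

lemma FMem.gammaMem_mulVec {F : Matrix (Fin 3) (Fin 3) ℝ} (hF : FMem F) (μ : Fin 3 → ℝ) :
    GammaMem μ (F *ᵥ μ) := by
  induction hF with
  | zero => simpa using GammaMem.zero
  | step i _ ih => exact R_mulVec μ i _ ▸ ih.step i

lemma FMem.gammaMem_col {F : Matrix (Fin 3) (Fin 3) ℝ} (hF : FMem F) (k : Fin 3) :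
    GammaMem (Pi.single k 1) (F.col k) :=
  mulVec_single_one F k ▸ hF.gammaMem_mulVec _

lemma GammaMem.exists_fMem_mulVec_eq {μ σ : Fin 3 → ℝ} (hσ : GammaMem μ σ) :
    ∃ F, FMem F ∧ F *ᵥ μ = σ := by
  induction hσ with
  | zero => exact ⟨0, .zero, zero_mulVec μ⟩
  | step i _ ih =>
    obtain ⟨F, hF, rfl⟩ := ih
    exact ⟨RM i F, hF.step i, (R_mulVec μ i F).symm⟩

lemma exists_int_two_mul_cartanB2_eq (i j : Fin 3) : ∃ c : ℤ, 2 * cartanB2 i j = c := by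
  refine ⟨!![2, 0, -2; 0, 2, -2; -1, -1, 2] i j, ?_⟩
  fin_cases i <;> fin_cases j <;> norm_num [cartanB2]

lemma R_mem_addSubgroup {H : AddSubgroup ℝ} {μ σ : Fin 3 → ℝ} {i : Fin 3} (hμ : 4 * μ i ∈ H)
    (hσ : ∀ j, σ j ∈ H) (l : Fin 3) : R μ i σ l ∈ H := by
  obtain rfl | hl := eq_or_ne l i
  · have cartan_mul_mem (j : Fin 3) : 2 * (cartanB2 l j * σ j) ∈ H := by
      obtain ⟨c, hc⟩ := exists_int_two_mul_cartanB2_eq l j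
      rw [← mul_assoc, hc, ← zsmul_eq_mul]
      exact H.zsmul_mem (hσ j) c
    rw [R, Function.update_self, Finset.mul_sum]
    exact H.sub_mem (H.add_mem (hσ l) hμ) (H.sum_mem fun j _ => cartan_mul_mem j)
  · rw [R, Function.update_of_ne hl]
    exact hσ l

lemma GammaMem.mem_addSubgroup {H : AddSubgroup ℝ} {μ σ : Fin 3 → ℝ} (hσ : GammaMem μ σ)
    (hμ : ∀ i, 4 * μ i ∈ H) : ∀ l, σ l ∈ H := by
  induction hσ with
  | zero => exact fun _ => H.zero_mem
  | step i _ ih => exact R_mem_addSubgroup (hμ i) ih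

/-- The Pohozaev identity for `σ` with parameter `μ`, a quadratic identity preserved by the `R_i`.
Indices are shifted by one with respect to the usual `σ₁, σ₂, σ₃`. -/
def PohozaevIdentity (μ σ : Fin 3 → ℝ) : Prop :=
  (σ 0 - σ 2) ^ 2 + (σ 1 - σ 2) ^ 2 = 4 * (μ 0 * σ 0 + μ 1 * σ 1 + 2 * μ 2 * σ 2)

namespace PohozaevIdentity

variable {μ σ : Fin 3 → ℝ}

lemma reflect (h : PohozaevIdentity μ σ) (i : Fin 3) : PohozaevIdentity μ (R μ i σ) := by
  unfold PohozaevIdentity at h ⊢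
  fin_cases i <;> simp [R, cartanB2, Fin.sum_univ_three] <;> linear_combination h

/-- Subtracting a linear form from the identity and completing both squares leaves this bound.
`Pi.single i M` merges the three cases, the shift by `M` occurring in the `i`-th square only. -/
lemma neg_sq_add_sq_le_mul (h : PohozaevIdentity μ σ) {M : ℝ} (hM : μ 0 + μ 1 + 2 * μ 2 = M)
    (i : Fin 3) :
    -(((Pi.single i M : Fin 3 → ℝ) 0 - μ 0) ^ 2 + ((Pi.single i M : Fin 3 → ℝ) 1 - μ 1) ^ 2) ≤
      M * σ i := by
  set c : Fin 3 → ℝ := Pi.single i M with hc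
  have squares_nonneg :
      0 ≤ (σ 0 - σ 2 + 2 * (c 0 - μ 0)) ^ 2 + (σ 1 - σ 2 + 2 * (c 1 - μ 1)) ^ 2 := by positivity
  have completed_squares :
      (σ 0 - σ 2 + 2 * (c 0 - μ 0)) ^ 2 + (σ 1 - σ 2 + 2 * (c 1 - μ 1)) ^ 2 =
        4 * (M * σ i + (c 0 - μ 0) ^ 2 + (c 1 - μ 1) ^ 2) := by
    unfold PohozaevIdentity at h
    subst hM
    fin_cases i <;> simp [hc] <;> linear_combination h
  linarith

lemma neg_two_le_of_single {k : Fin 3} (h : PohozaevIdentity (Pi.single k 1) σ) (i : Fin 3) :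
    -2 ≤ σ i := by
  have bound := h.neg_sq_add_sq_le_mul rfl i
  fin_cases k <;> fin_cases i <;> norm_num [Pi.single_apply, Fin.ext_iff] at bound ⊢ <;> linarith

end PohozaevIdentity

lemma GammaMem.pohozaevIdentity {μ σ : Fin 3 → ℝ} (hσ : GammaMem μ σ) : PohozaevIdentity μ σ := by
  induction hσ with
  | zero => simp [PohozaevIdentity]
  | step i _ ih => exact ih.reflect i

lemma exists_nsmul_eq_of_mem_zmultiples {G : Type*} [AddCommGroup G] [LinearOrder G]
    [IsOrderedAddMonoid G] {a x : G} (hx : x ∈ AddSubgroup.zmultiples a) (ha : 0 < a)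
    (hax : -a < x) : ∃ n : ℕ, n • a = x := by
  obtain ⟨z, rfl⟩ := AddSubgroup.mem_zmultiples_iff.mp hx
  have z_gt : -1 < z := by
    rwa [← neg_one_zsmul, zsmul_lt_zsmul_iff_left ha] at hax
  lift z to ℕ using by lia
  exact ⟨z, (natCast_zsmul a z).symm⟩

lemma GammaMem.exists_nat_eq_four_mul {k : Fin 3} {σ : Fin 3 → ℝ}
    (hσ : GammaMem (Pi.single k 1) σ) (i : Fin 3) : ∃ n : ℕ, σ i = 4 * n := by
  have four_mul_mem (j : Fin 3) :
      4 * (Pi.single k 1 : Fin 3 → ℝ) j ∈ AddSubgroup.zmultiples (4 : ℝ) := by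
    obtain rfl | hj := eq_or_ne j k <;> simp [*]
  have lower_bound : -2 ≤ σ i := hσ.pohozaevIdentity.neg_two_le_of_single i
  obtain ⟨n, hn⟩ := exists_nsmul_eq_of_mem_zmultiples (hσ.mem_addSubgroup four_mul_mem i)
    four_pos (by linarith)
  exact ⟨n, by rw [← hn, nsmul_eq_mul, mul_comm]⟩

/-- Every entry of every matrix in `𝔉` is a nonnegative integer multiple of `4`;
consequently every `σ ∈ Γ(μ)` has the form `σ_i = 4 ∑_j n_{ij} μ_j` with `n_{ij}`
nonnegative integers. -/
theorem fmat_entries_nonneg_multiples_of_four :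
    (∀ F : Matrix (Fin 3) (Fin 3) ℝ, FMem F → ∀ i j, ∃ n : ℕ, F i j = 4 * (n : ℝ)) ∧
    (∀ (μ : Fin 3 → ℝ) (σ : Fin 3 → ℝ), GammaMem μ σ →
      ∃ n : Fin 3 → Fin 3 → ℕ, ∀ i, σ i = 4 * ∑ j, (n i j : ℝ) * μ j) := by
  have entries {F : Matrix (Fin 3) (Fin 3) ℝ} (hF : FMem F) (i j : Fin 3) :
      ∃ n : ℕ, F i j = 4 * (n : ℝ) := (hF.gammaMem_col j).exists_nat_eq_four_mul i
  refine ⟨fun F hF => entries hF, fun μ σ hσ => ?_⟩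
  obtain ⟨F, hF, rfl⟩ := hσ.exists_fMem_mulVec_eq
  choose n hn using entries hF
  refine ⟨n, fun i => ?_⟩
  simp only [mulVec, dotProduct, hn, Finset.mul_sum, mul_assoc]
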